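/- The vincular quasi-shuffle coproduct is multiplicative with respect to concatenation of vincular patterns: for all vincular patterns (𝔰,σ), (𝔱,τ), (𝔞,α), (𝔟,β), C((𝔞,α), (𝔟,β); (𝔰,σ) • (𝔱,τ)) = Σ C((𝔞₁,α₁), (𝔟₁,β₁); (𝔰,σ)) · C((𝔞₂,α₂), (𝔟₂,β₂); (𝔱,τ)), the sum running over all factorizations (𝔞,α) = (𝔞₁,α₁) • (𝔞₂,α₂) and (𝔟,β) = (𝔟₁,β₁) • (𝔟₂,β₂) into vincular patterns (allowing empty factors). -/

import Mathlib

/-!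
Let `p`, `q` have sizes `m`, `n`. The idea is that the pairs `(A, A')` counted by
`C(a, b; p • q)` are exactly the juxtapositions `(A₁ ∪ (A₂ + m), A₁' ∪ (A₂' + m))` of a pair
counted by some `C(a₁, b₁; p)` and a pair counted by some `C(a₂, b₂; q)`, where `a = a₁ • a₂` and
`b = b₁ • b₂`.

Gluing, standardization of interval partitions and standardization of restricted permutations
all turn juxtaposition into concatenation (`glue_joinIP`, `stdIP_joinIP`, `stdRestrict_joinSet`),
so such juxtapositions are counted (`joinPair_mem_coeffSet`). Conversely, a block of one of the
two partitions lies in a block of their gluing `p • q`, hence does not straddle `m`; both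
partitions therefore split at `m`, and the same identities yield the factorizations
(`exists_of_mem_coeffSet`).

The resulting union over factorizations is disjoint: the pair `(A, A')` determines its parts below
and above `m`, the sizes of `A₁` and `A₁'` are those of `a₁` and `b₁`, and a factorization is
determined by the size of its first factor (`vincConcat_cancel`). The last fact also shows that
there are finitely many factorizations, so the `finsum` is a genuine sum.
-/

open Set

/-- A block: a nonempty interval of consecutive positive integers. -/
def IsIntervalBlock (B : Set ℕ) : Prop :=
  B.Nonempty ∧ (∀ x ∈ B, 1 ≤ x) ∧
    ∀ x ∈ B, ∀ z ∈ B, ∀ y : ℕ, x ≤ y → y ≤ z → y ∈ B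

/-- An interval partition of a finite subset of the positive integers:
a family of pairwise disjoint nonempty intervals with finite ground set. -/
def IsIntervalPartition (P : Set (Set ℕ)) : Prop :=
  (⋃₀ P).Finite ∧ (∀ B ∈ P, IsIntervalBlock B) ∧
    ∀ B ∈ P, ∀ C ∈ P, B ≠ C → B ∩ C = ∅

/-- An interval partition with prescribed ground set `A`. -/
def IsIntervalPartitionOf (P : Set (Set ℕ)) (A : Set ℕ) : Prop :=
  IsIntervalPartition P ∧ ⋃₀ P = A

/-- Standardized interval partitions: interval partitions of `{1, …, n}`. -/
def IsStdIP (P : Set (Set ℕ)) : Prop :=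
  IsIntervalPartition P ∧ ∃ n : ℕ, ⋃₀ P = Set.Icc 1 n

/-- Refinement order: same ground set, and every block of `P`
is contained in some block of `Q`. -/
def IPle (P Q : Set (Set ℕ)) : Prop :=
  ⋃₀ P = ⋃₀ Q ∧ ∀ B ∈ P, ∃ C ∈ Q, B ⊆ C

/-- The equivalence relation on blocks generated by having nonempty
intersection (among members of `S`). -/
def glueRel (S : Set (Set ℕ)) : Set ℕ → Set ℕ → Prop :=
  Relation.EqvGen fun X Y => X ∈ S ∧ Y ∈ S ∧ (X ∩ Y).Nonempty

/-- Gluing of two interval partitions. -/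
def glue (P Q : Set (Set ℕ)) : Set (Set ℕ) :=
  (fun T => ⋃₀ {X ∈ P ∪ Q | glueRel (P ∪ Q) T X}) '' (P ∪ Q)

/-- The relation on `A` generated by `y = x + 1`. -/
def cliqueRel (A : Set ℕ) : ℕ → ℕ → Prop :=
  Relation.EqvGen fun x y => x ∈ A ∧ y ∈ A ∧ y = x + 1

/-- `cliques A`: the coarsest interval partition of `A`. -/
def cliques (A : Set ℕ) : Set (Set ℕ) :=
  (fun x => {y ∈ A | cliqueRel A x y}) '' A

/-- `𝓘(A)`: the interval partition of `A ∩ ⋃₀ 𝓘` induced by `𝓘`. -/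
def restrictIP (P : Set (Set ℕ)) (A : Set ℕ) : Set (Set ℕ) :=
  {Z | Z ≠ ∅ ∧ ∃ B ∈ P, ∃ c ∈ cliques A, Z = B ∩ c}

/-- The unique order preserving map sending a finite `S ⊆ ℕ` onto `{1,…,|S|}`. -/
noncomputable def stdMap (S : Set ℕ) (x : ℕ) : ℕ := {y ∈ S | y ≤ x}.ncard

/-- Standardization of an interval partition. -/
noncomputable def stdIP (P : Set (Set ℕ)) : Set (Set ℕ) :=
  (fun B => stdMap (⋃₀ P) '' B) '' P

/-- Shifting all blocks of a partition up by `m`. -/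
def shiftIP (m : ℕ) (P : Set (Set ℕ)) : Set (Set ℕ) :=
  (fun B => (fun x => x + m) '' B) '' P

/-- Concatenation of standardized interval partitions. -/
noncomputable def concatIP (P Q : Set (Set ℕ)) : Set (Set ℕ) :=
  P ∪ shiftIP (⋃₀ P).ncard Q

/-- Quasi-shuffle section coefficient `c(𝔰,𝔱;𝔤)`. -/
noncomputable def secCoeff (s t g : Set (Set ℕ)) : ℕ :=
  {p : Set ℕ × Set ℕ | p.1 ∪ p.2 = ⋃₀ g ∧
      ∃ I I' : Set (Set ℕ), IsIntervalPartitionOf I p.1 ∧ IsIntervalPartitionOf I' p.2 ∧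
        stdIP I = s ∧ stdIP I' = t ∧ glue I I' = g}.ncard

/-- The signature pairing `⟨IPC(𝔏), 𝔰⟩`. -/
noncomputable def IPC (L s : Set (Set ℕ)) : ℕ :=
  {A : Set ℕ | A ⊆ ⋃₀ L ∧ IPle s (stdIP (restrictIP L A))}.ncard

open Classical in
/-- The unique refinement `𝓘_𝔰` of `𝓘` with standardization `𝔰` (junk value otherwise). -/
noncomputable def refineTo (P s : Set (Set ℕ)) : Set (Set ℕ) :=
  if h : ∃ Q : Set (Set ℕ), IsIntervalPartition Q ∧ IPle Q P ∧ stdIP Q = s then h.choose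
  else ∅

/-- The concatenation of single blocks of the sizes listed in `l`. -/
noncomputable def concatList (l : List ℕ) : Set (Set ℕ) :=
  l.foldl (fun acc m => concatIP acc {Set.Icc 1 m}) ∅

/-- A permutation of `{1,…,n}`, encoded as a function on `ℕ` fixing everything else. -/
def IsPermOf (n : ℕ) (σ : ℕ → ℕ) : Prop :=
  Set.BijOn σ (Set.Icc 1 n) (Set.Icc 1 n) ∧ ∀ x : ℕ, x ∉ Set.Icc 1 n → σ x = x

open Classical in
/-- The `i`-th smallest element of `A` (junk value otherwise). -/
noncomputable def nthElt (A : Set ℕ) (i : ℕ) : ℕ :=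
  if h : ∃ x ∈ A, stdMap A x = i then h.choose else 0

/-- Standardization `st(Λ|_A)` of `Λ` restricted to `A`: the permutation of `{1,…,|A|}`
recording the relative order of the values of `Λ` on `A`. -/
noncomputable def stdRestrict (lam : ℕ → ℕ) (A : Set ℕ) : ℕ → ℕ := fun i =>
  if 1 ≤ i ∧ i ≤ A.ncard then {b ∈ A | lam b ≤ lam (nthElt A i)}.ncard else i

/-- Concatenation `σ ⊡ τ` of permutations of `{1,…,m}` and `{1,…,n}`. -/
def permConcat (m n : ℕ) (σ τ : ℕ → ℕ) : ℕ → ℕ := fun i =>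
  if 1 ≤ i ∧ i ≤ m then σ i
  else if m + 1 ≤ i ∧ i ≤ m + n then τ (i - m) + m
  else i

/-- A vincular pattern: a standardized interval partition of `{1,…,n}`
together with a permutation of `{1,…,n}`. -/
def IsVincular (p : Set (Set ℕ) × (ℕ → ℕ)) : Prop :=
  ∃ n : ℕ, IsIntervalPartitionOf p.1 (Set.Icc 1 n) ∧ IsPermOf n p.2

/-- Concatenation of vincular patterns. -/
noncomputable def vincConcat (p q : Set (Set ℕ) × (ℕ → ℕ)) : Set (Set ℕ) × (ℕ → ℕ) :=
  (concatIP p.1 q.1, permConcat (⋃₀ p.1).ncard (⋃₀ q.1).ncard p.2 q.2)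

/-- Vincular section coefficient `C((𝔰,σ),(𝔱,τ);(𝔤,γ))`. -/
noncomputable def vincCoeff (p q r : Set (Set ℕ) × (ℕ → ℕ)) : ℕ :=
  {AB : Set ℕ × Set ℕ | AB.1 ∪ AB.2 = ⋃₀ r.1 ∧
      (∃ I I' : Set (Set ℕ), IsIntervalPartitionOf I AB.1 ∧ IsIntervalPartitionOf I' AB.2 ∧
        stdIP I = p.1 ∧ stdIP I' = q.1 ∧ glue I I' = r.1) ∧
      stdRestrict r.2 AB.1 = p.2 ∧ stdRestrict r.2 AB.2 = q.2}.ncard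

/-- Vincular signature pairing `⟨GPC(𝔏,Λ), (𝔰,σ)⟩`. -/
noncomputable def GPC (L : Set (Set ℕ)) (lam : ℕ → ℕ) (p : Set (Set ℕ) × (ℕ → ℕ)) : ℕ :=
  {A : Set ℕ | A ⊆ ⋃₀ L ∧ IPle p.1 (stdIP (restrictIP L A)) ∧ stdRestrict lam A = p.2}.ncard

/-! ### Standardization maps -/

theorem stdMap_mono {A : Set ℕ} (hA : A.Finite) {x y : ℕ} (h : x ≤ y) :
    stdMap A x ≤ stdMap A y :=
  ncard_le_ncard (fun _ hz => ⟨hz.1, hz.2.trans h⟩) (hA.subset (sep_subset _ _))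

theorem stdMap_lt {A : Set ℕ} (hA : A.Finite) {x y : ℕ} (hy : y ∈ A) (h : x < y) :
    stdMap A x < stdMap A y := by
  refine ncard_lt_ncard ⟨fun z hz => ⟨hz.1, hz.2.trans h.le⟩, fun hs => ?_⟩
    (hA.subset (sep_subset _ _))
  have := (hs (show y ∈ {z ∈ A | z ≤ y} from ⟨hy, le_rfl⟩)).2
  omega

theorem stdMap_injOn {A : Set ℕ} (hA : A.Finite) : InjOn (stdMap A) A := by
  intro x hx y hy h
  rcases lt_trichotomy x y with h1 | h1 | h1
  · have := stdMap_lt hA hy h1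
    omega
  · exact h1
  · have := stdMap_lt hA hx h1
    omega

theorem stdMap_mem {A : Set ℕ} (hA : A.Finite) {x : ℕ} (hx : x ∈ A) :
    stdMap A x ∈ Icc 1 A.ncard := by
  refine ⟨?_, ncard_le_ncard (sep_subset _ _) hA⟩
  exact (ncard_pos (hA.subset (sep_subset _ _))).2 ⟨x, hx, le_rfl⟩

theorem stdMap_image {A : Set ℕ} (hA : A.Finite) : stdMap A '' A = Icc 1 A.ncard := by
  refine eq_of_subset_of_ncard_le (image_subset_iff.2 fun x hx => stdMap_mem hA hx) ?_
    (finite_Icc _ _)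
  rw [(stdMap_injOn hA).ncard_image, ← Finset.coe_Icc, ncard_coe_finset]
  simp

theorem nthElt_stdMap {A : Set ℕ} (hA : A.Finite) {x : ℕ} (hx : x ∈ A) :
    nthElt A (stdMap A x) = x := by
  have h : ∃ y ∈ A, stdMap A y = stdMap A x := ⟨x, hx, rfl⟩
  rw [nthElt, dif_pos h]
  exact stdMap_injOn hA h.choose_spec.1 hx h.choose_spec.2

theorem stdRestrict_stdMap {A : Set ℕ} (hA : A.Finite) (lam : ℕ → ℕ) {x : ℕ} (hx : x ∈ A) :
    stdRestrict lam A (stdMap A x) = {b ∈ A | lam b ≤ lam x}.ncard := by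
  have := stdMap_mem hA hx
  rw [stdRestrict, if_pos ⟨this.1, this.2⟩, nthElt_stdMap hA hx]

/-- On standardized positions, `stdRestrict lam A` is the standardization map of the set of
values `lam '' A`; this is why it is a permutation. -/
theorem stdRestrict_eq_stdMap {A : Set ℕ} (hA : A.Finite) {lam : ℕ → ℕ} (hl : InjOn lam A)
    {x : ℕ} (hx : x ∈ A) :
    stdRestrict lam A (stdMap A x) = stdMap (lam '' A) (lam x) := by
  rw [stdRestrict_stdMap hA lam hx, stdMap, ← (hl.mono (sep_subset _ _)).ncard_image]
  congr 1
  ext y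
  simp only [mem_image, mem_ofPred_eq]
  constructor
  · rintro ⟨b, ⟨hb, h⟩, rfl⟩
    exact ⟨⟨b, hb, rfl⟩, h⟩
  · rintro ⟨⟨b, hb, rfl⟩, h⟩
    exact ⟨b, ⟨hb, h⟩, rfl⟩

theorem isPermOf_stdRestrict {A : Set ℕ} (hA : A.Finite) {lam : ℕ → ℕ} (hl : InjOn lam A) :
    IsPermOf A.ncard (stdRestrict lam A) := by
  have hcard : (lam '' A).ncard = A.ncard := hl.ncard_image
  have hA' := hA.image lam
  refine ⟨⟨?_, ?_, ?_⟩, fun x hx => if_neg hx⟩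
  · rw [← stdMap_image hA]
    rintro _ ⟨x, hx, rfl⟩
    rw [stdRestrict_eq_stdMap hA hl hx, stdMap_image hA, ← hcard]
    exact stdMap_mem hA' (mem_image_of_mem _ hx)
  · rw [← stdMap_image hA]
    rintro _ ⟨x, hx, rfl⟩ _ ⟨y, hy, rfl⟩ h
    rw [stdRestrict_eq_stdMap hA hl hx, stdRestrict_eq_stdMap hA hl hy] at h
    rw [hl hx hy (stdMap_injOn hA' (mem_image_of_mem _ hx) (mem_image_of_mem _ hy) h)]
  · intro i hi
    rw [← hcard, ← stdMap_image hA'] at hi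
    obtain ⟨_, ⟨x, hx, rfl⟩, rfl⟩ := hi
    exact ⟨stdMap A x, stdMap_mem hA hx, stdRestrict_eq_stdMap hA hl hx⟩

theorem sUnion_stdIP (I : Set (Set ℕ)) (hI : (⋃₀ I).Finite) :
    ⋃₀ stdIP I = Icc 1 (⋃₀ I).ncard := by
  rw [← stdMap_image hI, stdIP]
  conv_rhs => rw [sUnion_eq_biUnion, image_iUnion₂, ← sUnion_eq_biUnion]
  rw [sUnion_image]

theorem isIntervalPartitionOf_stdIP {I : Set (Set ℕ)} (hI : IsIntervalPartition I) :
    IsIntervalPartitionOf (stdIP I) (Icc 1 (⋃₀ I).ncard) := by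
  obtain ⟨hf, hb, hd⟩ := hI
  refine ⟨⟨?_, ?_, ?_⟩, sUnion_stdIP I hf⟩
  · rw [sUnion_stdIP I hf]
    exact finite_Icc _ _
  · rintro _ ⟨B, hB, rfl⟩
    have hsub : B ⊆ ⋃₀ I := subset_sUnion_of_mem hB
    refine ⟨(hb B hB).1.image _, ?_, ?_⟩
    · rintro _ ⟨x, hx, rfl⟩
      exact (stdMap_mem hf (hsub hx)).1
    · rintro _ ⟨x, hx, rfl⟩ _ ⟨z, hz, rfl⟩ y hxy hyz
      have hy : y ∈ Icc 1 (⋃₀ I).ncard :=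
        ⟨(stdMap_mem hf (hsub hx)).1.trans hxy, hyz.trans (stdMap_mem hf (hsub hz)).2⟩
      rw [← stdMap_image hf] at hy
      obtain ⟨d, hd', rfl⟩ := hy
      refine ⟨d, (hb B hB).2.2 x hx z hz d ?_ ?_, rfl⟩
      · by_contra h
        have := stdMap_lt hf (hsub hx) (not_le.1 h)
        omega
      · by_contra h
        have := stdMap_lt hf hd' (not_le.1 h)
        omega
  · rintro _ ⟨B, hB, rfl⟩ _ ⟨C, hC, rfl⟩ hne
    have hBC : B ≠ C := fun h => hne (by rw [h])
    rw [eq_empty_iff_forall_notMem]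
    rintro _ ⟨⟨x, hx, rfl⟩, ⟨y, hy, hxy⟩⟩
    have : y = x := stdMap_injOn hf (subset_sUnion_of_mem hC hy) (subset_sUnion_of_mem hB hx) hxy
    subst this
    exact eq_empty_iff_forall_notMem.1 (hd B hB C hC hBC) y ⟨hx, hy⟩

/-! ### Juxtaposition of sets and partitions -/

/-- The set `A ∪ (B + m)`. -/
def joinSet (m : ℕ) (A B : Set ℕ) : Set ℕ := A ∪ (fun x => x + m) '' B

theorem add_injOn (m : ℕ) (B : Set ℕ) : InjOn (fun x => x + m) B :=
  (add_left_injective m).injOn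

/-- The family consisting of the blocks of `P` and the blocks of `Q` shifted up by `m`. Unlike in
`concatIP`, the shift `m` need not be the size of `⋃₀ P`. -/
def joinIP (m : ℕ) (P Q : Set (Set ℕ)) : Set (Set ℕ) := P ∪ shiftIP m Q

theorem sUnion_shiftIP (m : ℕ) (Q : Set (Set ℕ)) :
    ⋃₀ shiftIP m Q = (fun x => x + m) '' ⋃₀ Q := by
  conv_rhs => rw [sUnion_eq_biUnion, image_iUnion₂]
  rw [shiftIP, sUnion_image]

theorem sUnion_joinIP (m : ℕ) (P Q : Set (Set ℕ)) :
    ⋃₀ joinIP m P Q = joinSet m (⋃₀ P) (⋃₀ Q) := by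
  rw [joinIP, sUnion_union, sUnion_shiftIP, joinSet]

theorem preimage_shift (m : ℕ) (B : Set ℕ) :
    (fun x => x + m) ⁻¹' ((fun x => x + m) '' B) = B :=
  preimage_image_eq _ (add_left_injective m)

theorem joinSet_low {m : ℕ} {A B : Set ℕ} (hA : A ⊆ Icc 1 m) (hB : B ⊆ Ici 1) :
    {x ∈ joinSet m A B | x ≤ m} = A := by
  ext x
  constructor
  · rintro ⟨h | ⟨y, hy, rfl⟩, hx⟩
    · exact h
    · have : 1 ≤ y := hB hy
      simp only at hx
      omega
  · exact fun h => ⟨Or.inl h, (hA h).2⟩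

theorem joinSet_high {m : ℕ} {A B : Set ℕ} (hA : A ⊆ Icc 1 m) (hB : B ⊆ Ici 1) :
    {x | 1 ≤ x ∧ x + m ∈ joinSet m A B} = B := by
  ext x
  constructor
  · rintro ⟨h1, h | ⟨y, hy, h⟩⟩
    · have := (hA h).2
      omega
    · simp only [Nat.add_right_cancel_iff] at h
      exact h ▸ hy
  · exact fun h => ⟨hB h, Or.inr ⟨x, h, rfl⟩⟩

theorem joinSet_inj {m : ℕ} {A B A' B' : Set ℕ} (hA : A ⊆ Icc 1 m) (hB : B ⊆ Ici 1)
    (hA' : A' ⊆ Icc 1 m) (hB' : B' ⊆ Ici 1) (h : joinSet m A B = joinSet m A' B') :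
    A = A' ∧ B = B' := by
  constructor
  · rw [← joinSet_low hA hB, h, joinSet_low hA' hB']
  · rw [← joinSet_high hA hB, h, joinSet_high hA' hB']

theorem ncard_sep_joinSet {m : ℕ} {A B : Set ℕ} (hA : A ⊆ Icc 1 m) (hB : B ⊆ Ici 1)
    (hBf : B.Finite) (R : ℕ → Prop) :
    {x ∈ joinSet m A B | R x}.ncard
      = {x ∈ A | R x}.ncard + {x ∈ B | R (x + m)}.ncard := by
  have hAf : A.Finite := (finite_Icc 1 m).subset hA
  have h : {x ∈ joinSet m A B | R x}
      = {x ∈ A | R x} ∪ (fun x => x + m) '' {x ∈ B | R (x + m)} := by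
    ext x
    constructor
    · rintro ⟨h | ⟨y, hy, rfl⟩, hx⟩
      · exact Or.inl ⟨h, hx⟩
      · exact Or.inr ⟨y, ⟨hy, hx⟩, rfl⟩
    · rintro (⟨h, hx⟩ | ⟨y, ⟨hy, hx⟩, rfl⟩)
      · exact ⟨Or.inl h, hx⟩
      · exact ⟨Or.inr ⟨y, hy, rfl⟩, hx⟩
  rw [h, ncard_union_eq _ (hAf.subset (sep_subset _ _))
    ((hBf.subset (sep_subset _ _)).image _), (add_injOn _ _).ncard_image]
  rw [disjoint_left]
  rintro _ ⟨h, -⟩ ⟨y, ⟨hy, -⟩, rfl⟩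
  have := (hA h).2
  have : 1 ≤ y := hB hy
  simp only at *
  omega

theorem ncard_joinSet {m : ℕ} {A B : Set ℕ} (hA : A ⊆ Icc 1 m) (hB : B ⊆ Ici 1)
    (hBf : B.Finite) : (joinSet m A B).ncard = A.ncard + B.ncard := by
  simpa using ncard_sep_joinSet hA hB hBf (fun _ => True)

theorem stdMap_joinSet_low {m : ℕ} {A B : Set ℕ} (hA : A ⊆ Icc 1 m) (hB : B ⊆ Ici 1)
    (hBf : B.Finite) {x : ℕ} (hx : x ≤ m) : stdMap (joinSet m A B) x = stdMap A x := by
  have : {y ∈ B | y + m ≤ x} = ∅ := by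
    rw [eq_empty_iff_forall_notMem]
    rintro y ⟨hy, h⟩
    have : 1 ≤ y := hB hy
    omega
  rw [stdMap, ncard_sep_joinSet hA hB hBf (fun y => y ≤ x), this, ncard_empty, add_zero, stdMap]

theorem stdMap_joinSet_high {m : ℕ} {A B : Set ℕ} (hA : A ⊆ Icc 1 m) (hB : B ⊆ Ici 1)
    (hBf : B.Finite) (x : ℕ) :
    stdMap (joinSet m A B) (x + m) = stdMap B x + A.ncard := by
  have : {y ∈ A | y ≤ x + m} = A :=
    sep_eq_self_iff_mem_true.2 fun y hy => (hA hy).2.trans (by omega)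
  rw [stdMap, ncard_sep_joinSet hA hB hBf (fun y => y ≤ x + m), this, stdMap, add_comm]
  simp only [add_le_add_iff_right]

theorem stdIP_joinIP {m : ℕ} {I J : Set (Set ℕ)} (hI : ⋃₀ I ⊆ Icc 1 m) (hJ : ⋃₀ J ⊆ Ici 1)
    (hJf : (⋃₀ J).Finite) : stdIP (joinIP m I J) = concatIP (stdIP I) (stdIP J) := by
  have hIf : (⋃₀ I).Finite := (finite_Icc 1 m).subset hI
  have hc : (⋃₀ stdIP I).ncard = (⋃₀ I).ncard := by
    rw [sUnion_stdIP I hIf, ← Finset.coe_Icc, ncard_coe_finset]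
    simp
  rw [concatIP, hc, stdIP, sUnion_joinIP, joinIP, image_union, stdIP, stdIP]
  congr 1
  · refine image_congr fun B hB => image_congr fun x hx => ?_
    exact stdMap_joinSet_low hI hJ hJf (hI (subset_sUnion_of_mem hB hx)).2
  · rw [shiftIP, shiftIP, image_image, image_image]
    refine image_congr fun B hB => ?_
    rw [image_image, image_image]
    exact image_congr fun x hx => stdMap_joinSet_high hI hJ hJf x

theorem stdRestrict_joinSet {m n : ℕ} {σ τ : ℕ → ℕ} (hσ : IsPermOf m σ) (hτ : IsPermOf n τ)
    {A B : Set ℕ} (hA : A ⊆ Icc 1 m) (hB : B ⊆ Icc 1 n) :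
    stdRestrict (permConcat m n σ τ) (joinSet m A B)
      = permConcat A.ncard B.ncard (stdRestrict σ A) (stdRestrict τ B) := by
  have hAf : A.Finite := (finite_Icc 1 m).subset hA
  have hBf : B.Finite := (finite_Icc 1 n).subset hB
  have hB1 : B ⊆ Ici 1 := fun x hx => (hB hx).1
  have hJf : (joinSet m A B).Finite := hAf.union (hBf.image _)
  have low : ∀ x ∈ A, permConcat m n σ τ x = σ x := fun x hx => if_pos (hA hx)
  have high : ∀ x ∈ B, permConcat m n σ τ (x + m) = τ x + m := by
    intro x hx
    have h1 : 1 ≤ x := (hB hx).1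
    have h2 : x ≤ n := (hB hx).2
    rw [permConcat, if_neg (by omega), if_pos (by omega), Nat.add_sub_cancel]
  have hσm : ∀ x ∈ A, σ x ≤ m := fun x hx => (hσ.1.mapsTo (hA hx)).2
  have hτ1 : ∀ x ∈ B, 1 ≤ τ x := fun x hx => (hτ.1.mapsTo (hB hx)).1
  funext i
  by_cases hi : i ∈ Icc 1 (joinSet m A B).ncard
  · rw [← stdMap_image hJf] at hi
    obtain ⟨x, hx, rfl⟩ := hi
    rw [stdRestrict_stdMap hJf _ hx, ncard_sep_joinSet hA hB1 hBf]
    rcases hx with hx | ⟨y, hy, rfl⟩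
    · have hr := stdMap_mem hAf hx
      rw [stdMap_joinSet_low hA hB1 hBf (hA hx).2, low x hx,
        show permConcat A.ncard B.ncard (stdRestrict σ A) (stdRestrict τ B) (stdMap A x)
          = stdRestrict σ A (stdMap A x) from if_pos hr, stdRestrict_stdMap hAf _ hx]
      have e1 : {b ∈ A | permConcat m n σ τ b ≤ σ x} = {b ∈ A | σ b ≤ σ x} :=
        sep_ext_iff.2 fun b hb => by rw [low b hb]
      have e2 : {b ∈ B | permConcat m n σ τ (b + m) ≤ σ x} = ∅ := by
        rw [eq_empty_iff_forall_notMem]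
        rintro b ⟨hb, h⟩
        rw [high b hb] at h
        have := hσm x hx
        have := hτ1 b hb
        omega
      rw [e1, e2, ncard_empty, add_zero]
    · have hr := stdMap_mem hBf hy
      simp only [mem_Icc] at hr
      simp only
      rw [stdMap_joinSet_high hA hB1 hBf, high y hy]
      have e1 : {b ∈ A | permConcat m n σ τ b ≤ τ y + m} = A :=
        sep_eq_self_iff_mem_true.2 fun b hb => by
          rw [low b hb]
          exact (hσm b hb).trans (by omega)
      have e2 : {b ∈ B | permConcat m n σ τ (b + m) ≤ τ y + m} = {b ∈ B | τ b ≤ τ y} :=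
        sep_ext_iff.2 fun b hb => by rw [high b hb, add_le_add_iff_right]
      rw [e1, e2, permConcat, if_neg (by omega), if_pos (by omega), Nat.add_sub_cancel,
        stdRestrict_stdMap hBf _ hy, add_comm]
  · have hi' := hi
    rw [ncard_joinSet hA hB1 hBf, mem_Icc] at hi'
    rw [permConcat, if_neg (by omega), if_neg (by omega)]
    exact if_neg hi

/-! ### Gluing and juxtaposition -/

/-- Gluing of the overlapping members of a single family, so that
`glue P Q = glueFam (P ∪ Q)`. -/
def glueFam (S : Set (Set ℕ)) : Set (Set ℕ) :=
  (fun T => ⋃₀ {X ∈ S | glueRel S T X}) '' S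

theorem glue_eq_glueFam (P Q : Set (Set ℕ)) : glue P Q = glueFam (P ∪ Q) := rfl

theorem glueRel_mono {S T : Set (Set ℕ)} (h : S ⊆ T) {X Y : Set ℕ} (hXY : glueRel S X Y) :
    glueRel T X Y :=
  Relation.EqvGen.mono
    (p := fun X Y => X ∈ T ∧ Y ∈ T ∧ (X ∩ Y).Nonempty)
    (fun _ _ h' => ⟨h h'.1, h h'.2.1, h'.2.2⟩) _ _ hXY

/-- Chains of overlapping members never leave a subfamily disjoint from the rest. -/
theorem glueRel_union {S T : Set (Set ℕ)} (hd : ∀ X ∈ S, ∀ Y ∈ T, X ∩ Y = ∅) {X Y : Set ℕ}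
    (h : glueRel (S ∪ T) X Y) : (X ∈ S ↔ Y ∈ S) ∧ (X ∈ S → glueRel S X Y) := by
  induction h with
  | rel X Y h =>
    obtain ⟨hX, hY, hne⟩ := h
    have key : X ∈ S ↔ Y ∈ S := by
      constructor
      · intro hXS
        refine hY.resolve_right fun hYT => ?_
        exact hne.ne_empty (hd X hXS Y hYT)
      · intro hYS
        refine hX.resolve_right fun hXT => ?_
        exact hne.ne_empty (by rw [inter_comm]; exact hd Y hYS X hXT)
    exact ⟨key, fun hXS => Relation.EqvGen.rel _ _ ⟨hXS, key.1 hXS, hne⟩⟩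
  | refl X => exact ⟨Iff.rfl, fun _ => Relation.EqvGen.refl _⟩
  | symm X Y _ ih => exact ⟨ih.1.symm, fun hY => (ih.2 (ih.1.2 hY)).symm⟩
  | trans X Y Z _ _ ih1 ih2 =>
    exact ⟨ih1.1.trans ih2.1, fun hX => (ih1.2 hX).trans _ _ _ (ih2.2 (ih1.1.1 hX))⟩

theorem glueClass_union {S T : Set (Set ℕ)} (hd : ∀ X ∈ S, ∀ Y ∈ T, X ∩ Y = ∅) {X : Set ℕ}
    (hX : X ∈ S) : {Y ∈ S ∪ T | glueRel (S ∪ T) X Y} = {Y ∈ S | glueRel S X Y} := by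
  ext Y
  constructor
  · rintro ⟨-, h⟩
    have := glueRel_union hd h
    exact ⟨this.1.1 hX, this.2 hX⟩
  · rintro ⟨h1, h2⟩
    exact ⟨Or.inl h1, glueRel_mono subset_union_left h2⟩

theorem glueFam_union {S T : Set (Set ℕ)} (hd : ∀ X ∈ S, ∀ Y ∈ T, X ∩ Y = ∅) :
    glueFam (S ∪ T) = glueFam S ∪ glueFam T := by
  rw [glueFam, image_union]
  congr 1
  · refine image_congr fun X hX => ?_
    rw [glueClass_union hd hX]
  · refine image_congr fun X hX => ?_
    rw [union_comm S T, glueClass_union (fun X hX Y hY => ?_) hX]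
    rw [inter_comm]
    exact hd Y hY X hX

theorem glueRel_shift {m : ℕ} {S : Set (Set ℕ)} {X Y : Set ℕ} (h : glueRel S X Y) :
    glueRel (shiftIP m S) ((fun x => x + m) '' X) ((fun x => x + m) '' Y) := by
  induction h with
  | rel X Y h =>
    refine Relation.EqvGen.rel _ _ ⟨mem_image_of_mem _ h.1, mem_image_of_mem _ h.2.1, ?_⟩
    obtain ⟨z, hz⟩ := h.2.2
    exact ⟨z + m, ⟨z, hz.1, rfl⟩, ⟨z, hz.2, rfl⟩⟩
  | refl X => exact Relation.EqvGen.refl _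
  | symm X Y _ ih => exact ih.symm
  | trans X Y Z _ _ ih1 ih2 => exact ih1.trans _ _ _ ih2

theorem glueRel_unshift {m : ℕ} {S : Set (Set ℕ)} {X Y : Set ℕ}
    (h : glueRel (shiftIP m S) X Y) :
    glueRel S ((fun x => x + m) ⁻¹' X) ((fun x => x + m) ⁻¹' Y) := by
  induction h with
  | rel X Y h =>
    obtain ⟨⟨X, hX, rfl⟩, ⟨Y, hY, rfl⟩, ⟨_, ⟨x, hx, rfl⟩, y, hy, hxy⟩⟩ := h
    simp only [preimage_shift]
    have : y = x := add_left_injective m hxy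
    exact Relation.EqvGen.rel _ _ ⟨hX, hY, x, hx, this ▸ hy⟩
  | refl X => exact Relation.EqvGen.refl _
  | symm X Y _ ih => exact ih.symm
  | trans X Y Z _ _ ih1 ih2 => exact ih1.trans _ _ _ ih2

theorem glueFam_shift (m : ℕ) (S : Set (Set ℕ)) :
    glueFam (shiftIP m S) = shiftIP m (glueFam S) := by
  rw [glueFam]
  conv_lhs => rw [shiftIP, image_image]
  conv_rhs => rw [shiftIP, glueFam, image_image]
  refine image_congr fun X hX => ?_
  rw [← sUnion_shiftIP]
  congr 1
  ext Y
  constructor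
  · rintro ⟨⟨Y, hY, rfl⟩, h⟩
    have := glueRel_unshift h
    rw [preimage_shift, preimage_shift] at this
    exact ⟨Y, ⟨hY, this⟩, rfl⟩
  · rintro ⟨Y, ⟨hY, h⟩, rfl⟩
    exact ⟨mem_image_of_mem _ hY, glueRel_shift h⟩

theorem inter_shift_eq_empty {m : ℕ} {X Y : Set ℕ} (hX : X ⊆ Icc 1 m) (hY : Y ⊆ Ici 1) :
    X ∩ (fun x => x + m) '' Y = ∅ := by
  rw [eq_empty_iff_forall_notMem]
  rintro _ ⟨h, y, hy, rfl⟩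
  have := (hX h).2
  have : 1 ≤ y := hY hy
  simp only at *
  omega

theorem glue_joinIP {m : ℕ} {I I' J J' : Set (Set ℕ)} (hI : ⋃₀ I ⊆ Icc 1 m)
    (hI' : ⋃₀ I' ⊆ Icc 1 m) (hJ : ⋃₀ J ⊆ Ici 1) (hJ' : ⋃₀ J' ⊆ Ici 1) :
    glue (joinIP m I J) (joinIP m I' J') = joinIP m (glue I I') (glue J J') := by
  have h : joinIP m I J ∪ joinIP m I' J' = (I ∪ I') ∪ shiftIP m (J ∪ J') := by
    rw [joinIP, joinIP, union_union_union_comm, shiftIP, shiftIP, shiftIP, image_union]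
  rw [glue_eq_glueFam, h, glueFam_union, glueFam_shift, joinIP, glue_eq_glueFam,
    glue_eq_glueFam]
  rintro X hX _ ⟨Y, hY, rfl⟩
  refine inter_shift_eq_empty ?_ ?_
  · exact hX.elim (fun h => (subset_sUnion_of_mem h).trans hI)
      (fun h => (subset_sUnion_of_mem h).trans hI')
  · exact hY.elim (fun h => (subset_sUnion_of_mem h).trans hJ)
      (fun h => (subset_sUnion_of_mem h).trans hJ')

theorem exists_glue_superset {P Q : Set (Set ℕ)} {X : Set ℕ} (hX : X ∈ P ∪ Q) :
    ∃ Z ∈ glue P Q, X ⊆ Z :=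
  ⟨_, mem_image_of_mem _ hX,
    subset_sUnion_of_mem (show X ∈ {Y ∈ P ∪ Q | glueRel (P ∪ Q) X Y} from
      ⟨hX, Relation.EqvGen.refl _⟩)⟩

theorem sUnion_glue (P Q : Set (Set ℕ)) : ⋃₀ glue P Q = ⋃₀ P ∪ ⋃₀ Q := by
  rw [← sUnion_union]
  apply Subset.antisymm
  · refine sUnion_subset ?_
    rintro _ ⟨T, -, rfl⟩
    exact sUnion_mono (sep_subset _ _)
  · refine sUnion_subset fun X hX => ?_
    obtain ⟨Z, hZ, hs⟩ := exists_glue_superset hX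
    exact hs.trans (subset_sUnion_of_mem hZ)

/-! ### Decomposing families -/

theorem joinIP_inj {m : ℕ} {P Q P' Q' : Set (Set ℕ)} (hP : ⋃₀ P ⊆ Icc 1 m) (hQ : ⋃₀ Q ⊆ Ici 1)
    (hP' : ⋃₀ P' ⊆ Icc 1 m) (hQ' : ⋃₀ Q' ⊆ Ici 1) (hPn : ∅ ∉ P) (hQn : ∅ ∉ Q)
    (hPn' : ∅ ∉ P') (hQn' : ∅ ∉ Q') (h : joinIP m P Q = joinIP m P' Q') :
    P = P' ∧ Q = Q' := by
  have low : ∀ {P Q P' Q' : Set (Set ℕ)}, ⋃₀ P ⊆ Icc 1 m → ⋃₀ Q' ⊆ Ici 1 → ∅ ∉ P →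
      joinIP m P Q = joinIP m P' Q' → P ⊆ P' := by
    intro P Q P' Q' hP hQ' hPn h X hX
    have hX' : X ∈ joinIP m P' Q' := h ▸ Or.inl hX
    refine hX'.resolve_right ?_
    rintro ⟨Y, hY, rfl⟩
    have := inter_shift_eq_empty ((subset_sUnion_of_mem hX).trans hP)
      ((subset_sUnion_of_mem hY).trans hQ')
    rw [inter_self] at this
    exact hPn (this ▸ hX)
  have high : ∀ {P Q P' Q' : Set (Set ℕ)}, ⋃₀ P' ⊆ Icc 1 m → ⋃₀ Q ⊆ Ici 1 → ∅ ∉ Q →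
      joinIP m P Q = joinIP m P' Q' → Q ⊆ Q' := by
    intro P Q P' Q' hP' hQ hQn h Y hY
    have hY' : (fun x => x + m) '' Y ∈ joinIP m P' Q' := h ▸ Or.inr (mem_image_of_mem _ hY)
    rcases hY' with hY' | ⟨Z, hZ, hZY⟩
    · have := inter_shift_eq_empty ((subset_sUnion_of_mem hY').trans hP')
        ((subset_sUnion_of_mem hY).trans hQ)
      rw [inter_self, image_eq_empty] at this
      exact absurd (this ▸ hY) hQn
    · have : Z = Y := image_injective.2 (add_left_injective m) hZY
      exact this ▸ hZ
  exact ⟨(low hP hQ' hPn h).antisymm (low hP' hQ hPn' h.symm),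
    (high hP' hQ hQn h).antisymm (high hP hQ' hQn' h.symm)⟩

theorem IsIntervalPartition.empty_notMem {P : Set (Set ℕ)} (h : IsIntervalPartition P) :
    ∅ ∉ P := fun h' => not_nonempty_empty (h.2.1 _ h').1

theorem IsIntervalPartition.sUnion_subset_Ici {P : Set (Set ℕ)} (h : IsIntervalPartition P) :
    ⋃₀ P ⊆ Ici 1 := sUnion_subset fun B hB => (h.2.1 B hB).2.1

theorem IsIntervalPartition.joinIP {m : ℕ} {P Q : Set (Set ℕ)} (hP : IsIntervalPartition P)
    (hQ : IsIntervalPartition Q) (hPm : ⋃₀ P ⊆ Icc 1 m) : IsIntervalPartition (joinIP m P Q) := by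
  refine ⟨?_, ?_, ?_⟩
  · rw [sUnion_joinIP]
    exact hP.1.union (hQ.1.image _)
  · rintro _ (hB | ⟨B, hB, rfl⟩)
    · exact hP.2.1 _ hB
    · obtain ⟨h1, h2, h3⟩ := hQ.2.1 B hB
      refine ⟨h1.image _, ?_, ?_⟩
      · rintro _ ⟨x, hx, rfl⟩
        exact (h2 x hx).trans (Nat.le_add_right _ _)
      · rintro _ ⟨x, hx, rfl⟩ _ ⟨z, hz, rfl⟩ y hxy hyz
        simp only at hxy hyz
        exact ⟨y - m, h3 x hx z hz _ (by omega) (by omega), by simp only; omega⟩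
  · have cross : ∀ X ∈ P, ∀ Y ∈ Q, X ∩ (fun x => x + m) '' Y = ∅ := fun X hX Y hY =>
      inter_shift_eq_empty ((subset_sUnion_of_mem hX).trans hPm)
        ((subset_sUnion_of_mem hY).trans hQ.sUnion_subset_Ici)
    rintro B (hB | ⟨B, hB, rfl⟩) C (hC | ⟨C, hC, rfl⟩) hne
    · exact hP.2.2 B hB C hC hne
    · exact cross B hB C hC
    · rw [inter_comm]
      exact cross C hC B hB
    · rw [← image_inter (add_left_injective m), hQ.2.2 B hB C hC (fun h => hne (by rw [h])),
        image_empty]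

/-- An interval partition none of whose blocks straddles `m` is the juxtaposition of two interval
partitions. -/
theorem exists_joinIP {m : ℕ} {I : Set (Set ℕ)} (hI : IsIntervalPartition I)
    (h : ∀ X ∈ I, X ⊆ Icc 1 m ∨ ∀ x ∈ X, m < x) :
    ∃ I₁ I₂, IsIntervalPartition I₁ ∧ IsIntervalPartition I₂ ∧ ⋃₀ I₁ ⊆ Icc 1 m ∧
      I = joinIP m I₁ I₂ := by
  have hpre : ∀ {X : Set ℕ}, (∀ x ∈ X, m < x) →
      (fun x => x + m) '' ((fun x => x + m) ⁻¹' X) = X := by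
    intro X hX
    rw [image_preimage_eq_iff]
    intro x hx
    have := hX x hx
    exact ⟨x - m, by simp only; omega⟩
  refine ⟨{X ∈ I | X ⊆ Icc 1 m},
    (fun X => (fun x => x + m) ⁻¹' X) '' {X ∈ I | ∀ x ∈ X, m < x}, ?_, ?_, ?_, ?_⟩
  · exact ⟨hI.1.subset (sUnion_mono (sep_subset _ _)), fun B hB => hI.2.1 B hB.1,
      fun B hB C hC => hI.2.2 B hB.1 C hC.1⟩
  · refine ⟨?_, ?_, ?_⟩
    · refine (hI.1.preimage (add_injOn m _)).subset (sUnion_subset ?_)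
      rintro _ ⟨X, hX, rfl⟩
      exact preimage_mono (subset_sUnion_of_mem hX.1)
    · rintro _ ⟨X, ⟨hX, hXm⟩, rfl⟩
      obtain ⟨h1, h2, h3⟩ := hI.2.1 X hX
      refine ⟨?_, ?_, ?_⟩
      · rw [← hpre hXm] at h1
        exact h1.of_image
      · intro x hx
        have : m < x + m := hXm _ hx
        omega
      · intro x hx z hz y hxy hyz
        exact h3 _ hx _ hz _ (by simp only; omega) (by simp only; omega)
    · rintro _ ⟨X, ⟨hX, hXm⟩, rfl⟩ _ ⟨Y, ⟨hY, hYm⟩, rfl⟩ hne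
      simp only
      rw [← preimage_inter, hI.2.2 X hX Y hY (fun h => hne (by rw [h])), preimage_empty]
  · exact sUnion_subset fun X hX => hX.2
  · ext X
    constructor
    · intro hX
      rcases h X hX with h' | h'
      · exact Or.inl ⟨hX, h'⟩
      · exact Or.inr ⟨_, ⟨X, ⟨hX, h'⟩, rfl⟩, hpre h'⟩
    · rintro (hX | ⟨_, ⟨X, ⟨hX, hXm⟩, rfl⟩, rfl⟩)
      · exact hX.1
      · simp only
        rw [hpre hXm]
        exact hX

/-! ### Unique factorization of vincular patterns -/

theorem ncard_Icc_one (n : ℕ) : (Icc 1 n).ncard = n := by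
  rw [← Finset.coe_Icc, ncard_coe_finset]
  simp

theorem concatIP_eq_joinIP {P Q : Set (Set ℕ)} {m : ℕ} (hP : ⋃₀ P = Icc 1 m) :
    concatIP P Q = joinIP m P Q := by
  rw [concatIP, hP, ncard_Icc_one, joinIP]

theorem ncard_sUnion_vincConcat {u v : Set (Set ℕ) × (ℕ → ℕ)} (hu : IsVincular u)
    (hv : IsVincular v) :
    (⋃₀ (vincConcat u v).1).ncard = (⋃₀ u.1).ncard + (⋃₀ v.1).ncard := by
  obtain ⟨k, hk, -⟩ := hu
  obtain ⟨l, hl, -⟩ := hv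
  rw [vincConcat, concatIP_eq_joinIP hk.2, sUnion_joinIP,
    ncard_joinSet hk.2.subset hl.1.sUnion_subset_Ici hl.1.1]

/-- A factorization of a vincular pattern is determined by the size of its first factor. -/
theorem vincConcat_cancel {u v u' v' : Set (Set ℕ) × (ℕ → ℕ)} (hu : IsVincular u)
    (hv : IsVincular v) (hu' : IsVincular u') (hv' : IsVincular v')
    (hc : (⋃₀ u.1).ncard = (⋃₀ u'.1).ncard) (h : vincConcat u v = vincConcat u' v') :
    u = u' ∧ v = v' := by
  obtain ⟨k, hk, hσ⟩ := hu
  obtain ⟨k', hk', hσ'⟩ := hu'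
  obtain ⟨l, hl, hτ⟩ := hv
  obtain ⟨l', hl', hτ'⟩ := hv'
  rw [hk.2, hk'.2, ncard_Icc_one, ncard_Icc_one] at hc
  subst hc
  have h1 : concatIP u.1 v.1 = concatIP u'.1 v'.1 := congrArg Prod.fst h
  have h2 : permConcat (⋃₀ u.1).ncard (⋃₀ v.1).ncard u.2 v.2
      = permConcat (⋃₀ u'.1).ncard (⋃₀ v'.1).ncard u'.2 v'.2 := congrArg Prod.snd h
  rw [concatIP_eq_joinIP hk.2, concatIP_eq_joinIP hk'.2] at h1
  obtain ⟨e1, e2⟩ := joinIP_inj hk.2.subset hl.1.sUnion_subset_Ici hk'.2.subset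
    hl'.1.sUnion_subset_Ici hk.1.empty_notMem hl.1.empty_notMem hk'.1.empty_notMem
    hl'.1.empty_notMem h1
  have hll : l = l' := by rw [← ncard_Icc_one l, ← hl.2, e2, hl'.2, ncard_Icc_one]
  subst hll
  rw [hk.2, hk'.2, hl.2, hl'.2, ncard_Icc_one, ncard_Icc_one] at h2
  refine ⟨Prod.ext e1 (funext fun i => ?_), Prod.ext e2 (funext fun i => ?_)⟩
  · by_cases hi : i ∈ Icc 1 k
    · have := congrFun h2 i
      have hi' : 1 ≤ i ∧ i ≤ k := hi
      simp only [permConcat] at this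
      rwa [if_pos hi', if_pos hi'] at this
    · rw [hσ.2 i hi, hσ'.2 i hi]
  · by_cases hi : i ∈ Icc 1 l
    · have := congrFun h2 (i + k)
      have hi' : 1 ≤ i ∧ i ≤ l := hi
      simp only [permConcat] at this
      rw [if_neg (by omega), if_pos (by omega), if_neg (by omega), if_pos (by omega)] at this
      simpa using this
    · rw [hτ.2 i hi, hτ'.2 i hi]

/-! ### Splitting the pairs counted by a section coefficient -/

/-- The set of pairs counted by `vincCoeff p q r`. -/
def coeffSet (p q r : Set (Set ℕ) × (ℕ → ℕ)) : Set (Set ℕ × Set ℕ) :=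
  {AB : Set ℕ × Set ℕ | AB.1 ∪ AB.2 = ⋃₀ r.1 ∧
      (∃ I I' : Set (Set ℕ), IsIntervalPartitionOf I AB.1 ∧ IsIntervalPartitionOf I' AB.2 ∧
        stdIP I = p.1 ∧ stdIP I' = q.1 ∧ glue I I' = r.1) ∧
      stdRestrict r.2 AB.1 = p.2 ∧ stdRestrict r.2 AB.2 = q.2}

theorem ncard_sUnion_stdIP {I : Set (Set ℕ)} {A : Set ℕ} (h : IsIntervalPartitionOf I A) :
    (⋃₀ stdIP I).ncard = A.ncard := by
  rw [sUnion_stdIP I h.1.1, ncard_Icc_one, h.2]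

theorem coeffSet_facts {p q r : Set (Set ℕ) × (ℕ → ℕ)} {n : ℕ} (hr : ⋃₀ r.1 = Icc 1 n)
    {AB : Set ℕ × Set ℕ} (h : AB ∈ coeffSet p q r) :
    AB.1 ⊆ Icc 1 n ∧ AB.2 ⊆ Icc 1 n ∧
      (⋃₀ p.1).ncard = AB.1.ncard ∧ (⋃₀ q.1).ncard = AB.2.ncard := by
  obtain ⟨hu, ⟨I, I', hI, hI', h1, h2, -⟩, -⟩ := h
  rw [hr] at hu
  refine ⟨hu ▸ subset_union_left, hu ▸ subset_union_right, ?_, ?_⟩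
  · rw [← h1, ncard_sUnion_stdIP hI]
  · rw [← h2, ncard_sUnion_stdIP hI']

theorem coeffSet_finite {p q r : Set (Set ℕ) × (ℕ → ℕ)} {n : ℕ} (hr : ⋃₀ r.1 = Icc 1 n) :
    (coeffSet p q r).Finite := by
  refine ((finite_Icc 1 n).finite_subsets.prod (finite_Icc 1 n).finite_subsets).subset ?_
  intro AB h
  have := coeffSet_facts hr h
  exact ⟨this.1, this.2.1⟩

/-- Juxtaposition of pairs of sets, componentwise. -/
def joinPair (m : ℕ) (x : (Set ℕ × Set ℕ) × (Set ℕ × Set ℕ)) : Set ℕ × Set ℕ :=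
  (joinSet m x.1.1 x.2.1, joinSet m x.1.2 x.2.2)

theorem joinSet_union_joinSet (m : ℕ) (A B A' B' : Set ℕ) :
    joinSet m A B ∪ joinSet m A' B' = joinSet m (A ∪ A') (B ∪ B') := by
  rw [joinSet, joinSet, joinSet, image_union, union_union_union_comm]

/-- The set of pairs `w` of factorizations `a = w.1.1 • w.1.2`, `b = w.2.1 • w.2.2` into vincular
patterns. -/
def factorSet (a b : Set (Set ℕ) × (ℕ → ℕ)) :
    Set (((Set (Set ℕ) × (ℕ → ℕ)) × (Set (Set ℕ) × (ℕ → ℕ))) ×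
      (Set (Set ℕ) × (ℕ → ℕ)) × (Set (Set ℕ) × (ℕ → ℕ))) :=
  {w | IsVincular w.1.1 ∧ IsVincular w.1.2 ∧ IsVincular w.2.1 ∧ IsVincular w.2.2 ∧
    vincConcat w.1.1 w.1.2 = a ∧ vincConcat w.2.1 w.2.2 = b}

theorem factorSet_ext {a b : Set (Set ℕ) × (ℕ → ℕ)} {w w'} (hw : w ∈ factorSet a b)
    (hw' : w' ∈ factorSet a b) (h1 : (⋃₀ w.1.1.1).ncard = (⋃₀ w'.1.1.1).ncard)
    (h2 : (⋃₀ w.2.1.1).ncard = (⋃₀ w'.2.1.1).ncard) : w = w' := by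
  obtain ⟨v1, v2, v3, v4, e1, e2⟩ := hw
  obtain ⟨v1', v2', v3', v4', e1', e2'⟩ := hw'
  obtain ⟨f1, f2⟩ := vincConcat_cancel v1 v2 v1' v2' h1 (e1.trans e1'.symm)
  obtain ⟨f3, f4⟩ := vincConcat_cancel v3 v4 v3' v4' h2 (e2.trans e2'.symm)
  exact Prod.ext (Prod.ext f1 f2) (Prod.ext f3 f4)

theorem factorSet_finite (a b : Set (Set ℕ) × (ℕ → ℕ)) : (factorSet a b).Finite := by
  refine Finite.of_injOn
    (f := fun w => ((⋃₀ w.1.1.1).ncard, (⋃₀ w.2.1.1).ncard))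
    (t := Iic (⋃₀ a.1).ncard ×ˢ Iic (⋃₀ b.1).ncard) ?_ ?_
    ((finite_Iic _).prod (finite_Iic _))
  · rintro w ⟨v1, v2, v3, v4, e1, e2⟩
    have h1 := ncard_sUnion_vincConcat v1 v2
    have h2 := ncard_sUnion_vincConcat v3 v4
    rw [e1] at h1
    rw [e2] at h2
    exact ⟨by simp only [mem_Iic]; omega, by simp only [mem_Iic]; omega⟩
  · intro w hw w' hw' h
    simp only [Prod.mk.injEq] at h
    exact factorSet_ext hw hw' h.1 h.2

theorem joinPair_mem_coeffSet {p q a b : Set (Set ℕ) × (ℕ → ℕ)} {m n : ℕ}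
    (hp : IsIntervalPartitionOf p.1 (Icc 1 m)) (hσ : IsPermOf m p.2)
    (hq : IsIntervalPartitionOf q.1 (Icc 1 n)) (hτ : IsPermOf n q.2) {w}
    (hw : w ∈ factorSet a b) {x : (Set ℕ × Set ℕ) × (Set ℕ × Set ℕ)}
    (h1 : x.1 ∈ coeffSet w.1.1 w.2.1 p) (h2 : x.2 ∈ coeffSet w.1.2 w.2.2 q) :
    joinPair m x ∈ coeffSet a b (vincConcat p q) := by
  obtain ⟨-, -, -, -, e1, e2⟩ := hw
  obtain ⟨sA, sB, cA, cB⟩ := coeffSet_facts hp.2 h1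
  obtain ⟨sA', sB', cA', cB'⟩ := coeffSet_facts hq.2 h2
  obtain ⟨u1, ⟨I, I', hI, hI', iI, iI', g1⟩, r1, r1'⟩ := h1
  obtain ⟨u2, ⟨J, J', hJ, hJ', iJ, iJ', g2⟩, r2, r2'⟩ := h2
  have bI : ⋃₀ I ⊆ Icc 1 m := hI.2 ▸ sA
  have bI' : ⋃₀ I' ⊆ Icc 1 m := hI'.2 ▸ sB
  refine ⟨?_, ⟨joinIP m I J, joinIP m I' J', ⟨hI.1.joinIP hJ.1 bI, ?_⟩,
    ⟨hI'.1.joinIP hJ'.1 bI', ?_⟩, ?_, ?_, ?_⟩, ?_, ?_⟩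
  · simp only [joinPair, vincConcat]
    rw [joinSet_union_joinSet, u1, u2, concatIP_eq_joinIP hp.2, sUnion_joinIP]
  · rw [sUnion_joinIP, hI.2, hJ.2, joinPair]
  · rw [sUnion_joinIP, hI'.2, hJ'.2, joinPair]
  · rw [stdIP_joinIP bI hJ.1.sUnion_subset_Ici hJ.1.1, iI, iJ, ← e1, vincConcat]
  · rw [stdIP_joinIP bI' hJ'.1.sUnion_subset_Ici hJ'.1.1, iI', iJ', ← e2, vincConcat]
  · rw [glue_joinIP bI bI' hJ.1.sUnion_subset_Ici hJ'.1.sUnion_subset_Ici, g1, g2, vincConcat,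
      concatIP_eq_joinIP hp.2]
  · simp only [joinPair, vincConcat, ← e1]
    rw [hp.2, hq.2, ncard_Icc_one, ncard_Icc_one, stdRestrict_joinSet hσ hτ sA sA', r1, r2, cA,
      cA']
  · simp only [joinPair, vincConcat, ← e2]
    rw [hp.2, hq.2, ncard_Icc_one, ncard_Icc_one, stdRestrict_joinSet hσ hτ sB sB', r1', r2', cB,
      cB']

/-- The pattern `(std I, st(σ|_A))` carried by an interval partition `I` of `A` is vincular. -/
theorem isVincular_std {n : ℕ} {σ : ℕ → ℕ} (hσ : IsPermOf n σ) {I : Set (Set ℕ)}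
    (hI : IsIntervalPartition I) (hn : ⋃₀ I ⊆ Icc 1 n) :
    IsVincular (stdIP I, stdRestrict σ (⋃₀ I)) :=
  ⟨_, isIntervalPartitionOf_stdIP hI, isPermOf_stdRestrict hI.1 (hσ.1.injOn.mono hn)⟩

/-- Every pair counted for a concatenation splits. The blocks of the two partitions are contained
in blocks of their gluing, so none of them straddles the cut point `m`. -/
theorem exists_of_mem_coeffSet {p q a b : Set (Set ℕ) × (ℕ → ℕ)} {m n : ℕ}
    (hp : IsIntervalPartitionOf p.1 (Icc 1 m)) (hσ : IsPermOf m p.2)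
    (hq : IsIntervalPartitionOf q.1 (Icc 1 n)) (hτ : IsPermOf n q.2) {AB : Set ℕ × Set ℕ}
    (h : AB ∈ coeffSet a b (vincConcat p q)) :
    ∃ w ∈ factorSet a b, ∃ x : (Set ℕ × Set ℕ) × (Set ℕ × Set ℕ),
      (x.1 ∈ coeffSet w.1.1 w.2.1 p ∧ x.2 ∈ coeffSet w.1.2 w.2.2 q) ∧ joinPair m x = AB := by
  obtain ⟨A, B⟩ := AB
  obtain ⟨-, ⟨I, I', ⟨hI, rfl : ⋃₀ I = A⟩, ⟨hI', rfl : ⋃₀ I' = B⟩, iI, iI', g⟩, r, r'⟩ := h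
  simp only [vincConcat] at iI iI' g r r'
  rw [concatIP_eq_joinIP hp.2] at g
  rw [hp.2, hq.2, ncard_Icc_one, ncard_Icc_one] at r r'
  have split : ∀ X ∈ I ∪ I', X ⊆ Icc 1 m ∨ ∀ x ∈ X, m < x := by
    intro X hX
    obtain ⟨Z, hZ, hXZ⟩ := exists_glue_superset hX
    rw [g] at hZ
    rcases hZ with hZ | ⟨Y, hY, rfl⟩
    · exact Or.inl (hXZ.trans (hp.2 ▸ subset_sUnion_of_mem hZ))
    · refine Or.inr fun x hx => ?_
      obtain ⟨y, hy, rfl⟩ := hXZ hx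
      have : 1 ≤ y := hq.1.sUnion_subset_Ici (subset_sUnion_of_mem hY hy)
      simp only
      omega
  obtain ⟨I₁, I₂, hI₁, hI₂, b₁, rfl⟩ := exists_joinIP hI fun X hX => split X (Or.inl hX)
  obtain ⟨I₁', I₂', hI₁', hI₂', b₁', rfl⟩ := exists_joinIP hI' fun X hX => split X (Or.inr hX)
  rw [glue_joinIP b₁ b₁' hI₂.sUnion_subset_Ici hI₂'.sUnion_subset_Ici] at g
  have glue_ne : ∀ {P Q : Set (Set ℕ)}, IsIntervalPartition P → IsIntervalPartition Q →
      ∅ ∉ glue P Q := by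
    rintro P Q hP hQ ⟨T, hT, hTe⟩
    have hs : T ⊆ ∅ := hTe ▸ subset_sUnion_of_mem
      (show T ∈ {X ∈ P ∪ Q | glueRel (P ∪ Q) T X} from ⟨hT, Relation.EqvGen.refl _⟩)
    rw [subset_empty_iff.1 hs] at hT
    exact hT.elim hP.empty_notMem hQ.empty_notMem
  obtain ⟨g1, g2⟩ := joinIP_inj (by rw [sUnion_glue]; exact union_subset b₁ b₁')
    (by rw [sUnion_glue]; exact union_subset hI₂.sUnion_subset_Ici hI₂'.sUnion_subset_Ici)
    hp.2.subset hq.1.sUnion_subset_Ici (glue_ne hI₁ hI₁') (glue_ne hI₂ hI₂')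
    hp.1.empty_notMem hq.1.empty_notMem g
  have u1 : ⋃₀ I₁ ∪ ⋃₀ I₁' = ⋃₀ p.1 := by rw [← sUnion_glue, g1]
  have u2 : ⋃₀ I₂ ∪ ⋃₀ I₂' = ⋃₀ q.1 := by rw [← sUnion_glue, g2]
  have b₂ : ⋃₀ I₂ ⊆ Icc 1 n := by rw [← hq.2, ← u2]; exact subset_union_left
  have b₂' : ⋃₀ I₂' ⊆ Icc 1 n := by rw [← hq.2, ← u2]; exact subset_union_right
  rw [sUnion_joinIP, stdRestrict_joinSet hσ hτ b₁ b₂] at r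
  rw [sUnion_joinIP, stdRestrict_joinSet hσ hτ b₁' b₂'] at r'
  rw [stdIP_joinIP b₁ hI₂.sUnion_subset_Ici hI₂.1] at iI
  rw [stdIP_joinIP b₁' hI₂'.sUnion_subset_Ici hI₂'.1] at iI'
  refine ⟨(((stdIP I₁, stdRestrict p.2 (⋃₀ I₁)), (stdIP I₂, stdRestrict q.2 (⋃₀ I₂))),
    ((stdIP I₁', stdRestrict p.2 (⋃₀ I₁')), (stdIP I₂', stdRestrict q.2 (⋃₀ I₂')))),
    ⟨isVincular_std hσ hI₁ b₁, isVincular_std hτ hI₂ b₂, isVincular_std hσ hI₁' b₁',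
      isVincular_std hτ hI₂' b₂', ?_, ?_⟩,
    ((⋃₀ I₁, ⋃₀ I₁'), (⋃₀ I₂, ⋃₀ I₂')), ⟨⟨u1, ?_, rfl, rfl⟩, ⟨u2, ?_, rfl, rfl⟩⟩, ?_⟩
  · refine Prod.ext iI ?_
    simp only [vincConcat]
    rw [ncard_sUnion_stdIP ⟨hI₁, rfl⟩, ncard_sUnion_stdIP ⟨hI₂, rfl⟩, r]
  · refine Prod.ext iI' ?_
    simp only [vincConcat]
    rw [ncard_sUnion_stdIP ⟨hI₁', rfl⟩, ncard_sUnion_stdIP ⟨hI₂', rfl⟩, r']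
  · exact ⟨I₁, I₁', ⟨hI₁, rfl⟩, ⟨hI₁', rfl⟩, rfl, rfl, g1⟩
  · exact ⟨I₂, I₂', ⟨hI₂, rfl⟩, ⟨hI₂', rfl⟩, rfl, rfl, g2⟩
  · rw [joinPair, sUnion_joinIP, sUnion_joinIP]

/-- the vincular quasi-shuffle coproduct is multiplicative with
respect to concatenation of vincular patterns. -/
theorem vincCoeff_concat (p q a b : Set (Set ℕ) × (ℕ → ℕ))
    (hp : IsVincular p) (hq : IsVincular q) (ha : IsVincular a) (hb : IsVincular b) :
    vincCoeff a b (vincConcat p q)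
      = ∑ᶠ w ∈ {w : ((Set (Set ℕ) × (ℕ → ℕ)) × (Set (Set ℕ) × (ℕ → ℕ))) ×
            (Set (Set ℕ) × (ℕ → ℕ)) × (Set (Set ℕ) × (ℕ → ℕ)) |
            IsVincular w.1.1 ∧ IsVincular w.1.2 ∧ IsVincular w.2.1 ∧ IsVincular w.2.2 ∧
            vincConcat w.1.1 w.1.2 = a ∧ vincConcat w.2.1 w.2.2 = b},
          vincCoeff w.1.1 w.2.1 p * vincCoeff w.1.2 w.2.2 q := by
  obtain ⟨m, hpm, hσ⟩ := hp
  obtain ⟨n, hqn, hτ⟩ := hq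
  change (coeffSet a b (vincConcat p q)).ncard = ∑ᶠ w ∈ factorSet a b,
    (coeffSet w.1.1 w.2.1 p).ncard * (coeffSet w.1.2 w.2.2 q).ncard
  have key : coeffSet a b (vincConcat p q) = ⋃ w ∈ factorSet a b,
      joinPair m '' (coeffSet w.1.1 w.2.1 p ×ˢ coeffSet w.1.2 w.2.2 q) := by
    ext AB
    simp only [mem_iUnion₂, exists_prop]
    constructor
    · exact exists_of_mem_coeffSet hpm hσ hqn hτ
    · rintro ⟨w, hw, x, hx, rfl⟩
      exact joinPair_mem_coeffSet hpm hσ hqn hτ hw hx.1 hx.2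
  have inj : ∀ {u v u' v' c d c' d' : Set (Set ℕ) × (ℕ → ℕ)}
      {x y : (Set ℕ × Set ℕ) × (Set ℕ × Set ℕ)}, x ∈ coeffSet u v p ×ˢ coeffSet u' v' q →
      y ∈ coeffSet c d p ×ˢ coeffSet c' d' q → joinPair m x = joinPair m y → x = y := by
    intro u v u' v' c d c' d' x y hx hy h
    obtain ⟨x1, x2, -⟩ := coeffSet_facts hpm.2 hx.1
    obtain ⟨x3, x4, -⟩ := coeffSet_facts hqn.2 hx.2
    obtain ⟨y1, y2, -⟩ := coeffSet_facts hpm.2 hy.1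
    obtain ⟨y3, y4, -⟩ := coeffSet_facts hqn.2 hy.2
    have up : Icc 1 n ⊆ Ici 1 := fun z hz => hz.1
    obtain ⟨e1, e3⟩ := joinSet_inj x1 (x3.trans up) y1 (y3.trans up) (congrArg Prod.fst h)
    obtain ⟨e2, e4⟩ := joinSet_inj x2 (x4.trans up) y2 (y4.trans up) (congrArg Prod.snd h)
    exact Prod.ext (Prod.ext e1 e2) (Prod.ext e3 e4)
  rw [key, (factorSet_finite a b).ncard_biUnion]
  · refine finsum_mem_congr rfl fun w _ => ?_
    rw [InjOn.ncard_image fun x hx y hy h => inj hx hy h, ncard_prod]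
  · exact fun w _ => ((coeffSet_finite hpm.2).prod (coeffSet_finite hqn.2)).image _
  · intro w hw w' hw' hne
    refine disjoint_left.2 ?_
    rintro _ ⟨x, hx, rfl⟩ ⟨y, hy, hxy⟩
    -- A common element has the same first parts, whose sizes determine the factorization.
    have hyx := inj hy hx hxy
    subst hyx
    obtain ⟨-, -, x1, x2⟩ := coeffSet_facts hpm.2 hx.1
    obtain ⟨-, -, y1, y2⟩ := coeffSet_facts hpm.2 hy.1
    exact hne (factorSet_ext hw hw' (x1.trans y1.symm) (x2.trans y2.symm))
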